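/- arXiv:2511.04430 — 3 statements merged into one kernel-verified Lean document; each statement's English description precedes it below -/
import Mathlib

section
/- Let N be a positive integer and f, g ∈ R_N such that BB_N(f,g) is topological. Then the additive group of R_N ⧸ Ideal.span {f, g} is isomorphic to the direct product, over the prime factors p of N, of Q_p copies of ZMod (p^{k_p}), where k_p is the multiplicity of p in the prime factorization of N, and Q_p is the dimension of R_p ⧸ Ideal.span {f_p, g_p} as a vector space over ZMod p. (Consequently the anyon group C, the direct sum of two copies of such quotients, is isomorphic to the direct product of 2·Q_p copies of ZMod (p^{k_p}).) -/
/-- The Laurent polynomial ring `(ZMod N)[X^{±1}, Y^{±1}]`. -/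
abbrev RR (N : ℕ) : Type := AddMonoidAlgebra (ZMod N) (ℤ × ℤ)

/-- The code `BB_N(f,g)` is topological. -/
def IsTopological {N : ℕ} (f g : RR N) : Prop :=
  ∀ r s : RR N, r * f + s * g = 0 → ∃ h : RR N, r = h * g ∧ s = -(h * f)

/-- Coefficientwise reduction `R_N → R_p` modulo a divisor `p` of `N`. -/
noncomputable def red (N p : ℕ) (h : p ∣ N) : RR N →+* RR p :=
  AddMonoidAlgebra.liftNCRingHom
    ((AddMonoidAlgebra.singleZeroRingHom).comp (ZMod.castHom h (ZMod p)))
    (AddMonoidAlgebra.of (ZMod p) (ℤ × ℤ))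
    (fun _ _ => Commute.all _ _)

/-- The Koszul complex of `(f, g)` is exact in the middle: every syzygy is a multiple of the
trivial one. -/
def KoszulExact {R : Type*} [CommRing R] (f g : R) : Prop :=
  ∀ r s : R, r * f + s * g = 0 → ∃ h : R, r = h * g ∧ s = -(h * f)

namespace KoszulExact

section General

variable {R S : Type*} [CommRing R] [CommRing S] {f g : R}

theorem map_ringEquiv (e : R ≃+* S) (hfg : KoszulExact f g) : KoszulExact (e f) (e g) := by
  intro r s hrs
  obtain ⟨h, hr, hs⟩ := hfg (e.symm r) (e.symm s) (e.injective (by simpa using hrs))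
  exact ⟨e h, by simpa using congrArg e hr, by simpa using congrArg e hs⟩

/-- Exactness in the middle forces exactness on the left, by Nakayama's lemma. -/
theorem eq_zero_of_mul_eq_zero [IsNoetherianRing R] (hfg : KoszulExact f g) {h : R}
    (hf : h * f = 0) (hg : h * g = 0) : h = 0 := by
  let A : Ideal R := LinearMap.ker (LinearMap.mulRight R f)
  have hA : ∀ x, x ∈ A ↔ x * f = 0 := fun x => by simp [A]
  obtain ⟨r, hr, hr0⟩ := Submodule.exists_sub_one_mem_and_smul_eq_zero_of_fg_of_le_smul
    (Ideal.span {g}) A (IsNoetherian.noetherian A) (fun x hx => by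
      obtain ⟨y, hy, hy0⟩ := hfg x 0 (by simpa using (hA x).1 hx)
      rw [hy, mul_comm]
      exact Submodule.smul_mem_smul (Ideal.mem_span_singleton_self g)
        ((hA y).2 (neg_eq_zero.1 hy0.symm)))
  obtain ⟨t, ht⟩ := Ideal.mem_span_singleton.1 hr
  have := hr0 h ((hA h).2 hf)
  rw [smul_eq_mul] at this
  linear_combination this - h * ht - t * hg

/-- If `ker d = im e` and `ker e = im d` on `R`, then every syzygy of `(f, g)` modulo `d` is
trivial modulo `d`, and `ker d ≤ im e` on the quotient by `(f, g)`. -/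
theorem exists_of_mul_eq [IsNoetherianRing R] (hfg : KoszulExact f g) {d e : R} (hde : d * e = 0)
    (hd : ∀ x, d * x = 0 → e ∣ x) (he : ∀ x, e * x = 0 → d ∣ x) {x a b : R}
    (hx : d * x = a * f + b * g) :
    ∃ h a' b' y, a = h * g + d * a' ∧ b = -(h * f) + d * b' ∧ x = a' * f + b' * g + e * y := by
  obtain ⟨h, ha, hb⟩ := hfg (e * a) (e * b) (by linear_combination x * hde - e * hx)
  obtain ⟨h', rfl⟩ := hd h (hfg.eq_zero_of_mul_eq_zero
    (by linear_combination d * hb - b * hde) (by linear_combination a * hde - d * ha))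
  obtain ⟨a', ha'⟩ := he (a - h' * g) (by linear_combination ha)
  obtain ⟨b', hb'⟩ := he (b + h' * f) (by linear_combination hb)
  obtain ⟨y, hy⟩ := hd (x - (a' * f + b' * g))
    (by linear_combination hx + f * ha' + g * hb')
  exact ⟨h', a', b', y, by linear_combination ha', by linear_combination hb',
    by linear_combination hy⟩

theorem dvd_of_mul_eq_mul [IsDomain R] (hfg : KoszulExact f g) {a c u v : R} (ha : a ≠ 0)
    (hf : a * f = c * u) (hg : a * g = c * v) : c ∣ a := by
  obtain ⟨h, hv, hu⟩ := hfg v (-u) (mul_left_cancel₀ ha (by linear_combination v * hf - u * hg))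
  have hu' : u = h * f := neg_injective hu
  by_cases hf0 : f = 0
  · have hg0 : g ≠ 0 := by
      rintro rfl
      obtain ⟨h, h1, -⟩ := hfg 1 0 (by simp [hf0])
      simp at h1
    exact ⟨h, mul_right_cancel₀ hg0 (by linear_combination hg + c * hv)⟩
  · exact ⟨h, mul_right_cancel₀ hf0 (by linear_combination hf + c * hu')⟩

end General

section Laurent

open Polynomial LaurentPolynomial

/-- A greatest common divisor over the fraction field, with denominators cleared. -/
theorem _root_.Polynomial.exists_C_mul_eq_bezout_mul {D : Type*} [CommRing D] [IsDomain D]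
    (f g : D[X]) : ∃ a : D, a ≠ 0 ∧ ∃ u v s t : D[X],
      Polynomial.C a * f = (u * f + v * g) * s ∧ Polynomial.C a * g = (u * f + v * g) * t := by
  classical
  let K := FractionRing D
  have key : ∀ q : K[X], ∃ b : D, b ≠ 0 ∧ ∃ Q : D[X],
      Q.map (algebraMap D K) = Polynomial.C (algebraMap D K b) * q := fun q => by
    obtain ⟨b, hb0, hb⟩ := IsLocalization.integerNormalization_spec (nonZeroDivisors D) q
    refine ⟨b, nonZeroDivisors.ne_zero hb0, _, hb.trans ?_⟩
    rw [Algebra.smul_def]; rfl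
  set F := f.map (algebraMap D K) with hF
  set G := g.map (algebraMap D K) with hG
  obtain ⟨s, hs⟩ := EuclideanDomain.gcd_dvd_left F G
  obtain ⟨t, ht⟩ := EuclideanDomain.gcd_dvd_right F G
  have hc := EuclideanDomain.gcd_eq_gcd_ab F G
  obtain ⟨b₁, hb₁, U, hU⟩ := key (EuclideanDomain.gcdA F G)
  obtain ⟨b₂, hb₂, V, hV⟩ := key (EuclideanDomain.gcdB F G)
  obtain ⟨b₃, hb₃, S, hS⟩ := key s
  obtain ⟨b₄, hb₄, T, hT⟩ := key t
  have inj := Polynomial.map_injective _ (IsFractionRing.injective D K)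
  refine ⟨b₁ * b₂ * b₃ * b₄, by simp [*], Polynomial.C b₂ * U, Polynomial.C b₁ * V,
    Polynomial.C b₄ * S, Polynomial.C b₃ * T, inj ?_, inj ?_⟩
  · simp only [Polynomial.map_mul, Polynomial.map_add, Polynomial.map_C, hU, hV, hS, ← hF, ← hG,
      map_mul]
    generalize EuclideanDomain.gcd F G = c at *
    rw [hc] at hs
    linear_combination Polynomial.C (algebraMap D K b₁) * Polynomial.C (algebraMap D K b₂) *
      Polynomial.C (algebraMap D K b₃) * Polynomial.C (algebraMap D K b₄) * hs
  · simp only [Polynomial.map_mul, Polynomial.map_add, Polynomial.map_C, hU, hV, hT, ← hF, ← hG,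
      map_mul]
    generalize EuclideanDomain.gcd F G = c at *
    rw [hc] at ht
    linear_combination Polynomial.C (algebraMap D K b₁) * Polynomial.C (algebraMap D K b₂) *
      Polynomial.C (algebraMap D K b₃) * Polynomial.C (algebraMap D K b₄) * ht

theorem exists_C_mem_span {D : Type*} [CommRing D] [IsDomain D] {f g : D[T;T⁻¹]}
    (hfg : KoszulExact f g) : ∃ a : D, a ≠ 0 ∧ LaurentPolynomial.C a ∈ Ideal.span {f, g} := by
  obtain ⟨m, F, hF⟩ := LaurentPolynomial.exists_T_pow f
  obtain ⟨n, G, hG⟩ := LaurentPolynomial.exists_T_pow g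
  obtain ⟨a, ha, u, v, s, t, hs, ht⟩ := Polynomial.exists_C_mul_eq_bezout_mul F G
  replace hs := congrArg toLaurent hs
  replace ht := congrArg toLaurent ht
  simp only [map_mul, map_add, toLaurent_C, hF, hG] at hs ht
  have hm : (T m : D[T;T⁻¹]) * T (-m) = 1 := by rw [← T_add]; simp
  have hn : (T n : D[T;T⁻¹]) * T (-n) = 1 := by rw [← T_add]; simp
  refine ⟨a, ha, ?_⟩
  obtain ⟨w, hw⟩ := hfg.dvd_of_mul_eq_mul (a := LaurentPolynomial.C a)
    (c := toLaurent u * (f * T m) + toLaurent v * (g * T n))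
    (u := toLaurent s * T (-m)) (v := toLaurent t * T (-n))
    (by rw [← toLaurent_C]; exact toLaurent_ne_zero.2 (by simpa using ha))
    (by linear_combination T (-m) * hs - LaurentPolynomial.C a * f * hm)
    (by linear_combination T (-n) * ht - LaurentPolynomial.C a * g * hn)
  rw [hw]
  exact Ideal.mem_span_pair.2 ⟨toLaurent u * T m * w, toLaurent v * T n * w, by ring⟩

end Laurent

section Field

open Polynomial AddMonoidAlgebra

variable {F : Type*} [Field F]

theorem exists_aeval_snd_mem_span {f g : AddMonoidAlgebra F (ℤ × ℤ)}
    (hfg : KoszulExact f g) : ∃ q : F[X], q ≠ 0 ∧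
      aeval (AddMonoidAlgebra.single ((0, 1) : ℤ × ℤ) (1 : F)) q ∈ Ideal.span {f, g} := by
  let e : AddMonoidAlgebra F (ℤ × ℤ) ≃ₐ[F] AddMonoidAlgebra (AddMonoidAlgebra F ℤ) ℤ :=
    AddMonoidAlgebra.curryAlgEquiv F
  obtain ⟨a, ha, hmem⟩ := exists_C_mem_span (hfg.map_ringEquiv e.toRingEquiv)
  obtain ⟨n, q, hq⟩ := LaurentPolynomial.exists_T_pow a
  refine ⟨q, ?_, ?_⟩
  · rintro rfl
    rw [map_zero] at hq
    exact ha (((LaurentPolynomial.isUnit_T n).mul_left_eq_zero).1 hq.symm)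
  · have h1 : e (aeval (AddMonoidAlgebra.single ((0, 1) : ℤ × ℤ) (1 : F)) q) =
        LaurentPolynomial.C (toLaurent q) := by
      have : (e.toAlgHom.comp
          (aeval (AddMonoidAlgebra.single ((0, 1) : ℤ × ℤ) (1 : F)))).toRingHom =
          (LaurentPolynomial.C).comp toLaurent := by
        refine Polynomial.ringHom_ext (fun x => ?_) ?_
        · have : (algebraMap F (AddMonoidAlgebra F (ℤ × ℤ))) x = single (0, 0) x := rfl
          simp [e, this]
        · simp [e]
      exact congrArg (fun φ : F[X] →+* _ => φ q) this
    have h2 : e (aeval (AddMonoidAlgebra.single ((0, 1) : ℤ × ℤ) (1 : F)) q) ∈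
        Ideal.span {e f, e g} := by
      rw [h1, hq, map_mul]
      exact Ideal.mul_mem_right _ _ hmem
    obtain ⟨u, v, huv⟩ := Ideal.mem_span_pair.1 h2
    exact Ideal.mem_span_pair.2 ⟨e.symm u, e.symm v, e.injective (by simpa using huv)⟩

theorem exists_aeval_fst_mem_span {f g : AddMonoidAlgebra F (ℤ × ℤ)}
    (hfg : KoszulExact f g) : ∃ q : F[X], q ≠ 0 ∧
      aeval (AddMonoidAlgebra.single ((1, 0) : ℤ × ℤ) (1 : F)) q ∈ Ideal.span {f, g} := by
  let e : AddMonoidAlgebra F (ℤ × ℤ) ≃ₐ[F] AddMonoidAlgebra F (ℤ × ℤ) :=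
    AddMonoidAlgebra.domCongr F F AddEquiv.prodComm
  obtain ⟨q, hq, hmem⟩ := exists_aeval_snd_mem_span (hfg.map_ringEquiv e.toRingEquiv)
  refine ⟨q, hq, ?_⟩
  obtain ⟨u, v, huv⟩ := Ideal.mem_span_pair.1 hmem
  refine Ideal.mem_span_pair.2 ⟨e.symm u, e.symm v, e.injective ?_⟩
  rw [← Polynomial.aeval_algHom_apply e]
  rw [map_add, map_mul, map_mul, e.apply_symm_apply, e.apply_symm_apply]
  simpa [e] using huv

theorem _root_.IsIntegral.of_mul_eq_one {A : Type*} [CommRing A] [Algebra F A] {x y : A}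
    (hxy : x * y = 1) (hx : IsIntegral F x) : IsIntegral F y := by
  let _ : Invertible x := ⟨y, by rw [mul_comm, hxy], hxy⟩
  exact isAlgebraic_iff_isIntegral.1 (IsAlgebraic.invOf (isAlgebraic_iff_isIntegral.2 hx))

theorem finite_quotient {f g : AddMonoidAlgebra F (ℤ × ℤ)} (hfg : KoszulExact f g) :
    Module.Finite F (AddMonoidAlgebra F (ℤ × ℤ) ⧸ Ideal.span {f, g}) := by
  let π := Ideal.Quotient.mkₐ F (Ideal.span {f, g})
  have alg : ∀ z : AddMonoidAlgebra F (ℤ × ℤ),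
      (∃ q : F[X], q ≠ 0 ∧ aeval z q ∈ Ideal.span {f, g}) → IsIntegral F (π z) := by
    rintro z ⟨q, hq, hz⟩
    refine isAlgebraic_iff_isIntegral.1 ⟨q, hq, ?_⟩
    rw [Polynomial.aeval_algHom_apply]
    exact Ideal.Quotient.eq_zero_iff_mem.2 hz
  have zpow : ∀ v : ℤ × ℤ, IsIntegral F (π (single v 1)) → ∀ n : ℤ,
      IsIntegral F (π (single (n • v) 1)) := by
    intro v hv n
    have hneg : IsIntegral F (π (single (-v) 1)) := hv.of_mul_eq_one (by
      rw [← map_mul, single_mul_single]; simp [← AddMonoidAlgebra.one_def])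
    obtain ⟨n, rfl | rfl⟩ := n.eq_nat_or_neg
    · have := hv.pow n
      rwa [← map_pow, single_pow, one_pow, ← natCast_zsmul] at this
    · have := hneg.pow n
      rwa [← map_pow, single_pow, one_pow, ← natCast_zsmul, smul_neg, ← neg_smul] at this
  have hX := zpow _ (alg _ hfg.exists_aeval_fst_mem_span)
  have hY := zpow _ (alg _ hfg.exists_aeval_snd_mem_span)
  have : Algebra.IsIntegral F (AddMonoidAlgebra F (ℤ × ℤ) ⧸ Ideal.span {f, g}) := by
    refine ⟨fun x => ?_⟩
    obtain ⟨x, rfl⟩ := Ideal.Quotient.mk_surjective x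
    change IsIntegral F (π x)
    induction x using AddMonoidAlgebra.induction_linear with
    | zero => simpa using isIntegral_zero
    | add x y hx hy => simpa using hx.add hy
    | single v c =>
      have : (single v c : AddMonoidAlgebra F (ℤ × ℤ)) =
          c • (single (v.1 • ((1, 0) : ℤ × ℤ)) 1 * single (v.2 • ((0, 1) : ℤ × ℤ)) 1) := by
        simp [single_mul_single]
      rw [this, map_smul, map_mul]
      exact ((hX v.1).mul (hY v.2)).smul c
  exact Algebra.IsIntegral.finite

end Field

end KoszulExact

theorem AddMonoidAlgebra.natCast_dvd_of_forall_coeff {A M : Type*} [CommRing A] [AddCommMonoid M]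
    {n : ℕ} {x : AddMonoidAlgebra A M} (h : ∀ m, (n : A) ∣ x.coeff m) :
    (n : AddMonoidAlgebra A M) ∣ x := by
  classical
  choose y hy using h
  refine ⟨.ofCoeff (Finsupp.onFinset x.coeff.support
    (fun m => if x.coeff m = 0 then 0 else y m) (fun m hm => by
      simp only [Finsupp.mem_support_iff]; intro h0; simp [h0] at hm)), ?_⟩
  ext m
  rw [← nsmul_eq_mul, AddMonoidAlgebra.coeff_smul]
  by_cases h0 : x.coeff m = 0
  · simp [h0]
  · simp [h0, ← hy]

theorem ZMod.natCast_dvd_of_mul_eq_zero {N d e : ℕ} (hN : 0 < N) (hde : d * e = N) {c : ZMod N}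
    (hc : (d : ZMod N) * c = 0) : (e : ZMod N) ∣ c := by
  have : NeZero N := ⟨hN.ne'⟩
  rw [← ZMod.natCast_zmod_val c, ← Nat.cast_mul, ZMod.natCast_eq_zero_iff] at hc
  have hd : 0 < d := Nat.pos_of_ne_zero (by rintro rfl; simp at hde; omega)
  rw [← ZMod.natCast_zmod_val c]
  exact Nat.cast_dvd_cast (Nat.dvd_of_mul_dvd_mul_left hd (hde ▸ hc))

namespace RR

variable {N : ℕ}

instance : IsNoetherianRing (RR N) :=
  have : IsNoetherianRing (ZMod N) :=
    isNoetherianRing_of_surjective ℤ _ (Int.castRingHom (ZMod N)) ZMod.intCast_surjective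
  Algebra.FiniteType.isNoetherianRing (ZMod N) (RR N)

theorem natCast_self : (N : RR N) = 0 := by
  rw [← map_natCast (algebraMap (ZMod N) (RR N)), ZMod.natCast_self, map_zero]

theorem natCast_dvd_of_mul_eq_zero {d e : ℕ} (hN : 0 < N) (hde : d * e = N) {x : RR N}
    (hx : (d : RR N) * x = 0) : (e : RR N) ∣ x := by
  refine AddMonoidAlgebra.natCast_dvd_of_forall_coeff fun m =>
    ZMod.natCast_dvd_of_mul_eq_zero hN hde ?_
  rw [← nsmul_eq_mul] at hx
  have := congrArg (fun y : RR N => y.coeff m) hx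
  rw [AddMonoidAlgebra.coeff_smul] at this
  simpa using this

theorem red_eq_mapRingHom {p : ℕ} (h : p ∣ N) :
    red N p h = AddMonoidAlgebra.mapRingHom (ℤ × ℤ) (ZMod.castHom h (ZMod p)) := by
  ext <;> simp [red]

theorem red_surjective {p : ℕ} (h : p ∣ N) : Function.Surjective (red N p h) := by
  intro x
  rw [red_eq_mapRingHom]
  induction x using AddMonoidAlgebra.induction_linear with
  | zero => exact ⟨0, map_zero _⟩
  | add x y hx hy =>
    obtain ⟨x, rfl⟩ := hx
    obtain ⟨y, rfl⟩ := hy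
    exact ⟨x + y, map_add _ _ _⟩
  | single m c =>
    obtain ⟨c, rfl⟩ := ZMod.castHom_surjective h c
    exact ⟨.single m c, by simp⟩

theorem natCast_dvd_of_red_eq_zero {p : ℕ} (hN : 0 < N) (h : p ∣ N) {x : RR N}
    (hx : red N p h x = 0) : (p : RR N) ∣ x := by
  have : NeZero N := ⟨hN.ne'⟩
  refine AddMonoidAlgebra.natCast_dvd_of_forall_coeff fun m => ?_
  rw [red_eq_mapRingHom] at hx
  have hc : ZMod.castHom h (ZMod p) (x.coeff m) = 0 := by
    rw [← AddMonoidAlgebra.coeff_mapRingHom, hx]; rfl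
  rw [← ZMod.natCast_zmod_val (x.coeff m), map_natCast, ZMod.natCast_eq_zero_iff] at hc
  rw [← ZMod.natCast_zmod_val (x.coeff m)]
  exact Nat.cast_dvd_cast hc

theorem koszulExact_red {f g : RR N} (hfg : KoszulExact f g) (hN : 0 < N) {p : ℕ} (h : p ∣ N) :
    KoszulExact (red N p h f) (red N p h g) := by
  intro r s hrs
  obtain ⟨r, rfl⟩ := red_surjective h r
  obtain ⟨s, rfl⟩ := red_surjective h s
  obtain ⟨x, hx⟩ := natCast_dvd_of_red_eq_zero hN h (x := r * f + s * g) (by simpa using hrs)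
  have hpe : p * (N / p) = N := Nat.mul_div_cancel' h
  obtain ⟨t, a, b, -, hr, hs, -⟩ := hfg.exists_of_mul_eq
    (d := (p : RR N)) (e := ((N / p : ℕ) : RR N))
    (by rw [← Nat.cast_mul, hpe, natCast_self])
    (fun x => natCast_dvd_of_mul_eq_zero hN hpe)
    (fun x => natCast_dvd_of_mul_eq_zero hN (by rw [mul_comm, hpe])) hx.symm
  exact ⟨red N p h t, by simp [hr, natCast_self], by simp [hs, natCast_self]⟩

theorem natCast_dvd_of_mul_eq_zero_quotient {f g : RR N} (hfg : KoszulExact f g) (hN : 0 < N)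
    {d e : ℕ} (hde : d * e = N) {x : RR N ⧸ Ideal.span {f, g}}
    (hx : (d : RR N ⧸ Ideal.span {f, g}) * x = 0) : (e : RR N ⧸ Ideal.span {f, g}) ∣ x := by
  obtain ⟨x, rfl⟩ := Ideal.Quotient.mk_surjective x
  rw [← map_natCast (Ideal.Quotient.mk (Ideal.span {f, g})), ← map_mul,
    Ideal.Quotient.eq_zero_iff_mem] at hx
  obtain ⟨a, b, hab⟩ := Ideal.mem_span_pair.1 hx
  obtain ⟨-, a, b, y, -, -, rfl⟩ := hfg.exists_of_mul_eq (d := (d : RR N)) (e := (e : RR N))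
    (by rw [← Nat.cast_mul, hde, natCast_self])
    (fun x => natCast_dvd_of_mul_eq_zero hN hde)
    (fun x => natCast_dvd_of_mul_eq_zero hN (by rw [mul_comm, hde])) hab.symm
  refine ⟨Ideal.Quotient.mk _ y, ?_⟩
  rw [map_add, Ideal.Quotient.eq_zero_iff_mem.2 (Ideal.mem_span_pair.2 ⟨a, b, rfl⟩), zero_add,
    map_mul, map_natCast]

/-- The map `R_N / (f, g) → R_p / (f_p, g_p)` induced by reduction. -/
noncomputable def redQuotient (f g : RR N) {p : ℕ} (h : p ∣ N) :
    RR N ⧸ Ideal.span {f, g} →+* RR p ⧸ Ideal.span {red N p h f, red N p h g} :=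
  Ideal.quotientMap _ (red N p h) (Ideal.span_le.2 (by
    rintro x (rfl | rfl) <;> exact Ideal.subset_span (by simp)))

theorem redQuotient_surjective (f g : RR N) {p : ℕ} (h : p ∣ N) :
    Function.Surjective (redQuotient f g h) :=
  Ideal.quotientMap_surjective (red_surjective h)

theorem natCast_dvd_of_redQuotient_eq_zero {f g : RR N} (hN : 0 < N) {p : ℕ} (h : p ∣ N)
    {x : RR N ⧸ Ideal.span {f, g}} (hx : redQuotient f g h x = 0) :
    (p : RR N ⧸ Ideal.span {f, g}) ∣ x := by
  obtain ⟨x, rfl⟩ := Ideal.Quotient.mk_surjective x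
  rw [redQuotient, Ideal.quotientMap_mk, Ideal.Quotient.eq_zero_iff_mem] at hx
  obtain ⟨a, b, hab⟩ := Ideal.mem_span_pair.1 hx
  obtain ⟨a, rfl⟩ := red_surjective h a
  obtain ⟨b, rfl⟩ := red_surjective h b
  obtain ⟨y, hy⟩ := natCast_dvd_of_red_eq_zero hN h (x := x - (a * f + b * g)) (by simp [hab])
  refine ⟨Ideal.Quotient.mk _ y, ?_⟩
  rw [← map_natCast (Ideal.Quotient.mk (Ideal.span {f, g})), ← map_mul, ← hy, map_sub,
    Ideal.Quotient.eq_zero_iff_mem.2 (Ideal.mem_span_pair.2 ⟨a, b, rfl⟩), sub_zero]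

end RR

/-- An abelian group killed by `p ^ k` on which `ker p ^ j ≤ im p ^ (k - j)` for all `j ≤ k` is a
free `ZMod (p ^ k)`-module on any lift of a basis of its reduction modulo `p`. -/
theorem AddCommGroup.nonempty_addEquiv_pi_zmod_of_lift {A ι : Type*} [AddCommGroup A] [Fintype ι]
    {p k : ℕ} (hk : ∀ x : A, p ^ k • x = 0)
    (htor : ∀ j ≤ k, ∀ x : A, p ^ j • x = 0 → ∃ y, x = p ^ (k - j) • y) (v : ι → A)
    (hspan : ∀ x : A, ∃ (c : ι → ℤ) (y : A), x = ∑ i, c i • v i + p • y)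
    (hind : ∀ (c : ι → ℤ) (y : A), ∑ i, c i • v i = p • y → ∀ i, (p : ℤ) ∣ c i) :
    Nonempty (A ≃+ (ι → ZMod (p ^ k))) := by
  classical
  let φ : (ι → ℤ) →+ A := (Fintype.linearCombination ℤ v).toAddMonoidHom
  have hφ : ∀ c, φ c = ∑ i, c i • v i := fun c => Fintype.linearCombination_apply ℤ v c
  let ψ : (ι → ℤ) →+ (ι → ZMod (p ^ k)) := (Int.castAddHom (ZMod (p ^ k))).compLeft ι
  have hφs : Function.Surjective φ := by
    have step : ∀ j, ∀ x : A, ∃ c y, x = φ c + p ^ j • y := by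
      intro j
      induction j with
      | zero => exact fun x => ⟨0, x, by simp⟩
      | succ j ih =>
        intro x
        obtain ⟨c, y, rfl⟩ := ih x
        obtain ⟨c', y', rfl⟩ := hspan y
        refine ⟨c + p ^ j • c', y', ?_⟩
        rw [← hφ, map_add, map_nsmul, smul_add, pow_succ, mul_smul, add_assoc]
    intro x
    obtain ⟨c, y, rfl⟩ := step k x
    exact ⟨c, by rw [hk, add_zero]⟩
  have hψs : Function.Surjective ψ := fun x => by
    choose c hc using fun i => ZMod.intCast_surjective (x i)
    exact ⟨c, funext hc⟩
  have hker : φ.ker = ψ.ker := by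
    ext c
    have hψ : c ∈ ψ.ker ↔ ∀ i, ((p ^ k : ℕ) : ℤ) ∣ c i := by
      simp only [AddMonoidHom.mem_ker, funext_iff, ← ZMod.intCast_zmod_eq_zero_iff_dvd]; rfl
    rw [hψ, AddMonoidHom.mem_ker]
    constructor
    · intro hc
      have step : ∀ j ≤ k, ∃ c', c = p ^ j • c' := by
        intro j
        induction j with
        | zero => exact fun _ => ⟨c, by simp⟩
        | succ j ih =>
          intro hj
          obtain ⟨c', rfl⟩ := ih (by omega)
          rw [map_nsmul] at hc
          obtain ⟨y, hy⟩ := htor j (by omega) _ hc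
          obtain ⟨l, hl⟩ : ∃ l, k - j = l + 1 := ⟨k - j - 1, by omega⟩
          rw [hl, pow_succ', mul_smul, hφ] at hy
          choose d hd using hind c' _ hy
          refine ⟨d, funext fun i => ?_⟩
          simp [hd, pow_succ, mul_assoc]
      obtain ⟨c', rfl⟩ := step k le_rfl
      intro i
      simp
    · intro hc
      choose d hd using hc
      have : c = p ^ k • d := funext fun i => by simp [hd]
      rw [this, map_nsmul, hk]
  exact ⟨(QuotientAddGroup.quotientKerEquivOfSurjective φ hφs).symm.trans
    ((QuotientAddGroup.quotientAddEquivOfEq hker).trans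
      (QuotientAddGroup.quotientKerEquivOfSurjective ψ hψs))⟩

theorem nonempty_addEquiv_quotient_pi_zmod {A B : Type*} [CommRing A] [CommRing B] {N p k : ℕ}
    [Fact p.Prime] [Algebra (ZMod p) B] [Module.Finite (ZMod p) B] (hk0 : k ≠ 0) (hk : p ^ k ∣ N)
    (htor : ∀ d e : ℕ, d * e = N → ∀ x : A, (d : A) * x = 0 → (e : A) ∣ x)
    (π : A →+* B) (hπ : Function.Surjective π) (hker : ∀ x, π x = 0 → (p : A) ∣ x) :
    Nonempty ((A ⧸ Ideal.span {((p ^ k : ℕ) : A)}) ≃+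
      (Fin (Module.finrank (ZMod p) B) → ZMod (p ^ k))) := by
  let mk := Ideal.Quotient.mk (Ideal.span {((p ^ k : ℕ) : A)})
  let b := Module.finBasis (ZMod p) B
  have hpB : (p : B) = 0 := by
    rw [← map_natCast (algebraMap (ZMod p) B), ZMod.natCast_self, map_zero]
  choose v hv using fun i => hπ (b i)
  have hsum : ∀ c : Fin (Module.finrank (ZMod p) B) → ℤ,
      π (∑ i, c i • v i) = ∑ i, (c i : ZMod p) • b i := fun c => by
    simp [hv, Int.cast_smul_eq_zsmul]
  have hmk : ∀ c : Fin (Module.finrank (ZMod p) B) → ℤ,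
      mk (∑ i, c i • v i) = ∑ i, c i • mk (v i) := fun c => by simp
  refine AddCommGroup.nonempty_addEquiv_pi_zmod_of_lift (p := p) ?_ ?_ (fun i => mk (v i)) ?_ ?_
  · intro x
    rw [nsmul_eq_mul, ← map_natCast mk,
      Ideal.Quotient.eq_zero_iff_mem.2 (Ideal.mem_span_singleton_self _), zero_mul]
  · intro j hj x hx
    obtain ⟨x, rfl⟩ := Ideal.Quotient.mk_surjective x
    rw [← map_nsmul, Ideal.Quotient.eq_zero_iff_mem, Ideal.mem_span_singleton] at hx
    obtain ⟨y, hy⟩ := hx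
    obtain ⟨M, rfl⟩ := hk
    have hpow : p ^ k = p ^ j * p ^ (k - j) := by rw [← pow_add]; congr 1; omega
    obtain ⟨z, hz⟩ := htor (p ^ j) (p ^ (k - j) * M) (by rw [hpow, mul_assoc])
      (x - (p ^ (k - j) : ℕ) * y) (by
        rw [nsmul_eq_mul, hpow] at hy
        push_cast at hy ⊢
        linear_combination hy)
    refine ⟨mk (y + M * z), ?_⟩
    rw [← map_nsmul, nsmul_eq_mul]
    congr 1
    push_cast at hz ⊢
    linear_combination hz
  · intro x
    obtain ⟨x, rfl⟩ := Ideal.Quotient.mk_surjective x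
    choose c hc using fun i => ZMod.intCast_surjective (b.repr (π x) i)
    obtain ⟨y, hy⟩ := hker (x - ∑ i, c i • v i) (by
      rw [map_sub, hsum]; simp [hc, b.sum_repr])
    refine ⟨c, mk y, ?_⟩
    rw [← hmk, ← map_nsmul, ← map_add, nsmul_eq_mul, ← hy, add_sub_cancel]
  · intro c y hcy i
    obtain ⟨y, rfl⟩ := Ideal.Quotient.mk_surjective y
    rw [← hmk, ← map_nsmul, Ideal.Quotient.eq, Ideal.mem_span_singleton] at hcy
    obtain ⟨z, hz⟩ := hcy
    have h0 : ∑ i, (c i : ZMod p) • b i = 0 := by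
      rw [← hsum, ← sub_add_cancel (∑ i, c i • v i) (p • y), hz]
      simp [hpB, hk0]
    exact (ZMod.intCast_zmod_eq_zero_iff_dvd _ _).1
      (Fintype.linearIndependent_iff.1 b.linearIndependent _ h0 i)

/-- Chinese remainder decomposition of a ring in which `N = 0`. -/
theorem nonempty_ringEquiv_pi_quotient_primePow {A : Type*} [CommRing A] {N : ℕ} (hN : 0 < N)
    (hNA : (N : A) = 0) :
    Nonempty (A ≃+* ((p : N.primeFactors) →
      A ⧸ Ideal.span {(((p : ℕ) ^ N.factorization p : ℕ) : A)})) := by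
  have hco : Pairwise fun p q : N.primeFactors =>
      ((p : ℕ) ^ N.factorization p).Coprime ((q : ℕ) ^ N.factorization q) := fun p q hpq =>
    Nat.coprime_pow_primes _ _ (Nat.prime_of_mem_primeFactors p.2)
      (Nat.prime_of_mem_primeFactors q.2) (fun h => hpq (Subtype.ext h))
  have hcop : Pairwise (Function.onFun IsCoprime fun p : N.primeFactors =>
      Ideal.span {(((p : ℕ) ^ N.factorization p : ℕ) : A)}) := fun p q hpq => by
    rw [Function.onFun, Ideal.isCoprime_span_singleton_iff]
    exact (hco hpq).cast
  have hinf : (⨅ p : N.primeFactors, Ideal.span {(((p : ℕ) ^ N.factorization p : ℕ) : A)}) = ⊥ := by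
    rw [Ideal.iInf_span_singleton_natCast hco, ← Ideal.span_singleton_eq_bot.2 hNA]
    congr 3
    rw [Finset.prod_coe_sort N.primeFactors (fun p => p ^ N.factorization p)]
    exact Nat.prod_factorization_pow_eq_self hN.ne'
  exact ⟨(RingEquiv.quotientBot A).symm.trans ((Ideal.quotEquivOfEq hinf.symm).trans
    (Ideal.quotientInfRingEquivPiQuotient _ hcop))⟩

theorem stmt2 (N : ℕ) (hN : 0 < N) (f g : RR N) (htopo : IsTopological f g) :
    Nonempty ((RR N ⧸ Ideal.span {f, g}) ≃+
      ((p : N.primeFactors) →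
        (Fin (Module.finrank (ZMod (p : ℕ))
            (RR (p : ℕ) ⧸ Ideal.span
              {red N (p : ℕ) (Nat.dvd_of_mem_primeFactors p.2) f,
               red N (p : ℕ) (Nat.dvd_of_mem_primeFactors p.2) g})) →
          ZMod ((p : ℕ) ^ N.factorization (p : ℕ))))) := by
  have hfg : KoszulExact f g := htopo
  obtain ⟨e⟩ := nonempty_ringEquiv_pi_quotient_primePow (A := RR N ⧸ Ideal.span {f, g}) hN
    (by rw [← map_natCast (Ideal.Quotient.mk _), RR.natCast_self, map_zero])
  refine ⟨e.toAddEquiv.trans (AddEquiv.piCongrRight fun p => Nonempty.some ?_)⟩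
  have : Fact (p : ℕ).Prime := ⟨Nat.prime_of_mem_primeFactors p.2⟩
  have hp := Nat.dvd_of_mem_primeFactors p.2
  have := (RR.koszulExact_red hfg hN hp).finite_quotient
  exact nonempty_addEquiv_quotient_pi_zmod (Finsupp.mem_support_iff.1 (by simp))
    (Nat.ordProj_dvd N p) (fun d e hde x => RR.natCast_dvd_of_mul_eq_zero_quotient hfg hN hde)
    (RR.redQuotient f g hp) (RR.redQuotient_surjective f g hp)
    (fun x => RR.natCast_dvd_of_redQuotient_eq_zero hN hp)
end

section
/- Let p be a prime, k ≥ 1, and f, g ∈ R_{p^k} such that BB_{p^k}(f,g) is topological. Then the module M = R_{p^k} ⧸ Ideal.span {f, g} is a free ZMod (p^k)-module of finite rank, and its rank equals the dimension of R_p ⧸ Ideal.span {f_p, g_p} as a vector space over ZMod p. -/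
section Koszul

variable {R : Type*} [CommRing R] {f g t : R} {n : ℕ}

/-- If the Koszul complex of `f, g` is exact in the middle, then a nilpotent element cannot divide
both `f` and `g`. -/
theorem not_dvd_and_dvd_of_isNilpotent [Nontrivial R] (ht : IsNilpotent t)
    (hfg : ∀ r s : R, r * f + s * g = 0 → ∃ h, r = h * g ∧ s = -(h * f)) :
    ¬ (t ∣ f ∧ t ∣ g) := by
  rintro ⟨⟨a, rfl⟩, ⟨b, rfl⟩⟩
  have eq_zero : ∀ h c : R, c = h * (t * c) → c = 0 := fun h c hc ↦ by
    have hu : IsUnit (1 - h * t) := ((Commute.all h t).isNilpotent_mul_left ht).isUnit_one_sub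
    exact hu.mul_right_eq_zero.mp (by linear_combination hc)
  obtain ⟨h, hb, ha⟩ := hfg b (-a) (by ring)
  obtain rfl := eq_zero h b hb
  obtain rfl := eq_zero h a (by linear_combination -ha)
  obtain ⟨h, h1, -⟩ := hfg 1 0 (by ring)
  simp at h1

/-- Cancellation of a factor prime to `t`, in a ring where `t ^ n` annihilates only multiples
of `t`. -/
theorem pow_dvd_of_pow_dvd_mul {f h : R} (hprime : ∀ a b, t ∣ a * b → t ∣ a ∨ t ∣ b)
    (hpow : ∀ x, t ^ n * x = 0 → t ∣ x) (hf : ¬ t ∣ f) (hdvd : t ^ n ∣ h * f) : t ^ n ∣ h := by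
  suffices H : ∀ j ≤ n, t ^ j ∣ h from H n le_rfl
  intro j hj
  induction j with
  | zero => simp
  | succ j ih =>
    obtain ⟨h', rfl⟩ := ih (by omega)
    obtain ⟨c, hc⟩ := (pow_dvd_pow t hj).trans hdvd
    have hx : t ∣ h' * f - t * c := hpow _ <| by
      obtain ⟨i, rfl⟩ := Nat.exists_eq_add_of_le (show j ≤ n by omega)
      linear_combination t ^ i * hc
    have hx' : t ∣ h' * f := (dvd_sub_left (dvd_mul_right t c)).mp hx
    rw [pow_succ]
    exact mul_dvd_mul_left _ ((hprime _ _ hx').resolve_right hf)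

/-- Exactness of the Koszul complex of `f, g` descends modulo `t`. -/
theorem exists_dvd_sub_of_dvd_mul_add [Nontrivial R] (ht : t ^ (n + 1) = 0)
    (hprime : ∀ a b, t ∣ a * b → t ∣ a ∨ t ∣ b) (hpow : ∀ x, t ^ n * x = 0 → t ∣ x)
    (hfg : ∀ r s : R, r * f + s * g = 0 → ∃ h, r = h * g ∧ s = -(h * f))
    {r s : R} (hrs : t ∣ r * f + s * g) : ∃ h, t ∣ r - h * g ∧ t ∣ s + h * f := by
  obtain ⟨c, hc⟩ := hrs
  obtain ⟨h, hr, hs⟩ := hfg (t ^ n * r) (t ^ n * s)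
    (by linear_combination t ^ n * hc + c * ht)
  have hdvd : t ^ n ∣ h := by
    have hnot := not_dvd_and_dvd_of_isNilpotent ⟨n + 1, ht⟩ hfg
    by_cases hf : t ∣ f
    · exact pow_dvd_of_pow_dvd_mul hprime hpow (fun hg ↦ hnot ⟨hf, hg⟩) ⟨r, hr.symm⟩
    · exact pow_dvd_of_pow_dvd_mul hprime hpow hf ⟨-s, by linear_combination hs⟩
  obtain ⟨h', rfl⟩ := hdvd
  exact ⟨h', hpow _ (by linear_combination hr), hpow _ (by linear_combination hs)⟩

/-- On the quotient by `(f, g)`, the annihilator of `t` consists of multiples of `t ^ n`. -/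
theorem exists_sub_mem_span_pair_of_mul_mem [Nontrivial R] (ht : t ^ (n + 1) = 0)
    (hprime : ∀ a b, t ∣ a * b → t ∣ a ∨ t ∣ b) (hpow : ∀ x, t ^ n * x = 0 → t ∣ x)
    (hann : ∀ x, t * x = 0 → t ^ n ∣ x)
    (hfg : ∀ r s : R, r * f + s * g = 0 → ∃ h, r = h * g ∧ s = -(h * f))
    {m : R} (hm : t * m ∈ Ideal.span {f, g}) : ∃ c, m - t ^ n * c ∈ Ideal.span {f, g} := by
  obtain ⟨r, s, hrs⟩ := Ideal.mem_span_pair.mp hm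
  obtain ⟨h, ⟨r', hr⟩, ⟨s', hs⟩⟩ :=
    exists_dvd_sub_of_dvd_mul_add ht hprime hpow hfg ⟨m, hrs⟩
  obtain ⟨c, hc⟩ := hann (m - r' * f - s' * g)
    (by linear_combination f * hr + g * hs - hrs)
  exact ⟨c, Ideal.mem_span_pair.mpr ⟨r', s', by linear_combination -hc⟩⟩

end Koszul

section Dimension

open Polynomial LaurentPolynomial

theorem ringKrullDim_le_of_isLocalization {R : Type*} (S : Type*) [CommRing R] [CommRing S]
    [Algebra R S] (M : Submonoid R) [IsLocalization M S] : ringKrullDim S ≤ ringKrullDim R :=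
  Order.krullDim_le_of_strictMono (PrimeSpectrum.comap (algebraMap R S)) <|
    Monotone.strictMono_of_injective (fun _ _ h ↦ Ideal.comap_mono h)
      (PrimeSpectrum.localization_comap_injective S M)

theorem LaurentPolynomial.ringKrullDim_le (R : Type*) [CommRing R] [IsNoetherianRing R] :
    ringKrullDim R[T;T⁻¹] ≤ ringKrullDim R + 1 :=
  (ringKrullDim_le_of_isLocalization _ (Submonoid.powers (X : R[X]))).trans
    Polynomial.ringKrullDim_of_isNoetherianRing.le

theorem AddMonoidAlgebra.ringKrullDim_int_prod_int_le (K : Type*) [Field K] :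
    ringKrullDim (AddMonoidAlgebra K (ℤ × ℤ)) ≤ 2 := by
  have : IsNoetherianRing K[T;T⁻¹] :=
    IsLocalization.isNoetherianRing (Submonoid.powers (X : K[X])) _ inferInstance
  calc ringKrullDim (AddMonoidAlgebra K (ℤ × ℤ))
      = ringKrullDim K[T;T⁻¹][T;T⁻¹] :=
        ringKrullDim_eq_of_ringEquiv AddMonoidAlgebra.curryRingEquiv
    _ ≤ ringKrullDim K[T;T⁻¹] + 1 := LaurentPolynomial.ringKrullDim_le _
    _ ≤ ringKrullDim K + 1 + 1 := by gcongr; exact LaurentPolynomial.ringKrullDim_le K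
    _ = 2 := by rw [ringKrullDim_eq_zero_of_field]; rfl

/-- Two Laurent polynomials in two variables over a field whose Koszul complex is exact in the
middle have a finite-dimensional quotient. -/
theorem AddMonoidAlgebra.finite_quotient_span_pair {K : Type*} [Field K]
    {f g : AddMonoidAlgebra K (ℤ × ℤ)}
    (hfg : ∀ r s, r * f + s * g = 0 → ∃ h, r = h * g ∧ s = -(h * f)) :
    Module.Finite K (AddMonoidAlgebra K (ℤ × ℤ) ⧸ Ideal.span {f, g}) := by
  by_cases hf : f = 0
  · obtain ⟨h, h1, -⟩ := hfg 1 0 (by simp [hf])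
    have htop : Ideal.span {f, g} = ⊤ := (Ideal.eq_top_iff_one _).mpr
      (Ideal.mem_span_pair.mpr ⟨0, h, by rw [← h1, zero_mul, zero_add]⟩)
    have := Ideal.Quotient.subsingleton_iff.mpr htop
    infer_instance
  have hle : Ideal.span {f} ≤ Ideal.span {f, g} := Ideal.span_mono (by simp)
  have hdim₁ := ringKrullDim_quotient_succ_le_of_nonZeroDivisor (mem_nonZeroDivisors_of_ne_zero hf)
  have hg : Ideal.Quotient.mk (Ideal.span {f}) g ∈ nonZeroDivisors _ := by
    refine mem_nonZeroDivisors_iff_right.mpr fun x hx ↦ ?_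
    obtain ⟨s, rfl⟩ := Ideal.Quotient.mk_surjective x
    rw [← map_mul, Ideal.Quotient.eq_zero_iff_mem, Ideal.mem_span_singleton] at hx
    obtain ⟨c, hc⟩ := hx
    obtain ⟨h, -, hs⟩ := hfg (-c) s (by linear_combination hc)
    rw [Ideal.Quotient.eq_zero_iff_mem, Ideal.mem_span_singleton]
    exact ⟨-h, by linear_combination hs⟩
  have hdim₂ := ringKrullDim_succ_le_of_surjective (Ideal.Quotient.factor hle)
    (Ideal.Quotient.factor_surjective hle) hg
    (by simpa using Ideal.Quotient.eq_zero_iff_mem.mpr (Ideal.subset_span (by simp)))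
  have hdim : ringKrullDim (AddMonoidAlgebra K (ℤ × ℤ) ⧸ Ideal.span {f, g}) + 2 ≤ 0 + 2 :=
    calc _ = ringKrullDim (AddMonoidAlgebra K (ℤ × ℤ) ⧸ Ideal.span {f, g}) + 1 + 1 := by
          rw [add_assoc]; rfl
      _ ≤ ringKrullDim (AddMonoidAlgebra K (ℤ × ℤ) ⧸ Ideal.span {f}) + 1 := by gcongr
      _ ≤ ringKrullDim (AddMonoidAlgebra K (ℤ × ℤ)) := hdim₁
      _ ≤ 0 + 2 := by simpa using AddMonoidAlgebra.ringKrullDim_int_prod_int_le K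
  have : Ring.KrullDimLE 0 (AddMonoidAlgebra K (ℤ × ℤ) ⧸ Ideal.span {f, g}) := by
    rw [Ring.krullDimLE_iff]
    exact (ENat.WithBot.add_le_add_natCast_right_iff (c := 2)).mp hdim
  exact (Module.finite_iff_krullDimLE_zero K _).mpr this

end Dimension

section Reduction

open Module

variable {A F M V : Type*} [CommRing A] [AddCommGroup M] [Module A M]
  {t : A}

/-- Nakayama's lemma for a nilpotent element `t`: a module is finite if its reduction modulo `t`
is. -/
theorem Module.Finite.of_finite_reduction [CommRing F] [AddCommGroup V] [Module F V]
    [Module.Finite F V] {σ : A →+* F} (hσ : Function.Surjective σ) (ht : IsNilpotent t)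
    (φ : M →ₛₗ[σ] V) (hφ : Function.Surjective φ) (hker : ∀ x, φ x = 0 → ∃ y, x = t • y) :
    Module.Finite A M := by
  have : RingHomSurjective σ := ⟨hσ⟩
  obtain ⟨s, hs⟩ := Module.Finite.fg_top (R := F) (M := V)
  choose ψ hψ using hφ
  have hmap : (Submodule.span A (Set.image ψ s)).map φ = ⊤ := by
    rw [Submodule.map_span, ← Set.image_comp, ← hs]
    congr 1
    simp [hψ]
  have hdecomp : ∀ j : ℕ, ∀ x : M, ∃ y, x - t ^ j • y ∈ Submodule.span A (Set.image ψ s) := by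
    intro j
    induction j with
    | zero => exact fun x ↦ ⟨x, by simp⟩
    | succ j ih =>
      intro x
      obtain ⟨y, hy⟩ := ih x
      obtain ⟨z, hz, hzy⟩ : φ y ∈ (Submodule.span A (Set.image ψ s)).map φ := hmap ▸ Submodule.mem_top
      obtain ⟨w, hw⟩ := hker (y - z) (by rw [map_sub, hzy, sub_self])
      refine ⟨w, ?_⟩
      have : x - t ^ (j + 1) • w = (x - t ^ j • y) + t ^ j • z := by
        rw [pow_succ, mul_smul, ← hw, smul_sub]; abel
      exact this ▸ add_mem hy (Submodule.smul_mem _ _ hz)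
  obtain ⟨j, hj⟩ := ht
  refine ⟨Submodule.fg_def.mpr ⟨Set.image ψ s, s.finite_toSet.image ψ, eq_top_iff.mpr fun x _ ↦ ?_⟩⟩
  obtain ⟨y, hy⟩ := hdecomp j x
  simpa [hj] using hy

/-- The rank of a finite free module equals the dimension of its reduction modulo `t`. -/
theorem Module.finrank_eq_of_reduction [Field F] [Nontrivial A] [AddCommGroup V] [Module F V]
    [Module.Free A M] [Module.Finite A M] {σ : A →+* F} (hσ : Function.Surjective σ)
    (ht : σ t = 0) (φ : M →ₛₗ[σ] V) (hφ : Function.Surjective φ)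
    (hker : ∀ x, φ x = 0 → ∃ y, x = t • y) : finrank A M = finrank F V := by
  have : RingHomSurjective σ := ⟨hσ⟩
  let b := Module.Free.chooseBasis A M
  have hli : LinearIndependent F (φ ∘ b) := by
    rw [Fintype.linearIndependent_iff]
    intro c hc i
    choose a ha using fun j ↦ hσ (c j)
    obtain ⟨y, hy⟩ := hker (∑ j, a j • b j) (by simpa [map_sum, ha] using hc)
    have := congr_arg (fun x ↦ b.repr x i) hy
    simp only [b.repr_sum_self, map_smul, Finsupp.smul_apply, smul_eq_mul] at this
    rw [← ha, this, map_mul, ht, zero_mul]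
  have hspan : ⊤ ≤ Submodule.span F (Set.range (φ ∘ b)) := by
    rw [Set.range_comp, ← Submodule.map_span, b.span_eq, Submodule.map_top,
      LinearMap.range_eq_top.mpr hφ]
  rw [finrank_eq_card_basis b, finrank_eq_card_basis (Basis.mk hli hspan)]

/-- A finitely presented module over a local ring whose maximal ideal is generated by `t` is free
if the annihilator of `t` in the module is spanned by multiples of a scalar killing `t`. -/
theorem Module.free_of_smul_eq_zero [IsLocalRing A] [Module.FinitePresentation A M]
    (hmax : IsLocalRing.maximalIdeal A = Ideal.span {t}) {u : A} (hu : u * t = 0)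
    (hM : ∀ x : M, t • x = 0 → ∃ y, x = u • y) : Module.Free A M := by
  have htm : t ∈ IsLocalRing.maximalIdeal A := hmax ▸ Ideal.mem_span_singleton_self t
  have hpure : ∀ z : TensorProduct A (IsLocalRing.maximalIdeal A) M,
      ∃ x : M, z = TensorProduct.tmul A ⟨t, htm⟩ x := by
    intro z
    induction z with
    | zero => exact ⟨0, by simp⟩
    | add z w hz hw =>
      obtain ⟨x, rfl⟩ := hz
      obtain ⟨y, rfl⟩ := hw
      exact ⟨x + y, (TensorProduct.tmul_add _ _ _).symm⟩
    | tmul a x =>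
      obtain ⟨a, ha⟩ := a
      obtain ⟨c, rfl⟩ := Ideal.mem_span_singleton.mp (hmax ▸ ha)
      refine ⟨c • x, ?_⟩
      rw [← TensorProduct.smul_tmul]
      congr 1
      exact Subtype.ext (mul_comm t c)
  refine Module.free_of_maximalIdeal_rTensor_injective
    ((injective_iff_map_eq_zero _).mpr fun z hz ↦ ?_)
  obtain ⟨x, rfl⟩ := hpure z
  have hx : t • x = 0 := by
    simpa using congr_arg (TensorProduct.lid A M) hz
  obtain ⟨y, rfl⟩ := hM x hx
  rw [← TensorProduct.smul_tmul]
  have : u • (⟨t, htm⟩ : IsLocalRing.maximalIdeal A) = 0 := Subtype.ext hu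
  rw [this, TensorProduct.zero_tmul]

end Reduction

section ZModPrimePow

variable {p : ℕ}

theorem ZMod.natCast_dvd_of_castHom_eq_zero {N : ℕ} [NeZero N] (h : p ∣ N) {a : ZMod N}
    (ha : ZMod.castHom h (ZMod p) a = 0) : (p : ZMod N) ∣ a := by
  rw [← ZMod.natCast_zmod_val a, map_natCast, ZMod.natCast_eq_zero_iff] at ha
  rw [← ZMod.natCast_zmod_val a]
  exact Nat.cast_dvd_cast ha

theorem ZMod.natCast_dvd_of_natCast_mul_eq_zero {N b c : ℕ} [NeZero N] (hN : b * c = N)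
    {a : ZMod N} (ha : (b : ZMod N) * a = 0) : (c : ZMod N) ∣ a := by
  have hb : 0 < b := Nat.pos_of_ne_zero fun hb ↦ NeZero.ne N (by rw [← hN, hb, zero_mul])
  rw [← ZMod.natCast_zmod_val a, ← Nat.cast_mul, ZMod.natCast_eq_zero_iff] at ha
  rw [← ZMod.natCast_zmod_val a]
  exact Nat.cast_dvd_cast (Nat.dvd_of_mul_dvd_mul_left hb (hN.dvd.trans ha))

theorem ZMod.natCast_pow_eq_zero (p k : ℕ) : (p : ZMod (p ^ k)) ^ k = 0 := by
  rw [← Nat.cast_pow, ZMod.natCast_self]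

theorem ZMod.ker_castHom_prime_pow [Fact p.Prime] {k : ℕ} (h : p ∣ p ^ k) :
    RingHom.ker (ZMod.castHom h (ZMod p)) = Ideal.span {(p : ZMod (p ^ k))} := by
  refine le_antisymm (fun a ha ↦ ?_) ?_
  · exact Ideal.mem_span_singleton.mpr (ZMod.natCast_dvd_of_castHom_eq_zero h ha)
  · rw [Ideal.span_singleton_le_iff_mem, RingHom.mem_ker, map_natCast, ZMod.natCast_self]

theorem ZMod.isMaximal_ker_castHom [Fact p.Prime] {N : ℕ} (h : p ∣ N) :
    (RingHom.ker (ZMod.castHom h (ZMod p))).IsMaximal :=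
  RingHom.ker_isMaximal_of_surjective _ (ZMod.castHom_surjective h)

theorem ZMod.isLocalRing_prime_pow [Fact p.Prime] {k : ℕ} (h : p ∣ p ^ k) :
    IsLocalRing (ZMod (p ^ k)) := by
  have hmax := ZMod.isMaximal_ker_castHom h
  have : Nontrivial (ZMod (p ^ k)) := (ZMod.castHom h (ZMod p)).domain_nontrivial
  have hle : RingHom.ker (ZMod.castHom h (ZMod p)) ≤ nilradical (ZMod (p ^ k)) := by
    rw [ZMod.ker_castHom_prime_pow, Ideal.span_singleton_le_iff_mem]
    exact ⟨k, ZMod.natCast_pow_eq_zero p k⟩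
  have hne : nilradical (ZMod (p ^ k)) ≠ ⊤ := fun htop ↦
    not_isNilpotent_one (mem_nilradical.mp (htop ▸ Submodule.mem_top))
  have : (nilradical (ZMod (p ^ k))).IsMaximal := hmax.eq_of_le hne hle ▸ hmax
  exact IsLocalRing.of_isMaximal_nilradical _

theorem ZMod.maximalIdeal_prime_pow [Fact p.Prime] {k : ℕ} (h : p ∣ p ^ k)
    [IsLocalRing (ZMod (p ^ k))] :
    IsLocalRing.maximalIdeal (ZMod (p ^ k)) = Ideal.span {(p : ZMod (p ^ k))} := by
  rw [← ZMod.ker_castHom_prime_pow h]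
  exact (IsLocalRing.eq_maximalIdeal (ZMod.isMaximal_ker_castHom h)).symm

end ZModPrimePow

section Laurent

theorem AddMonoidAlgebra.natCast_dvd {A G : Type*} [CommRing A] [AddCommMonoid G] {c : ℕ}
    {x : AddMonoidAlgebra A G} (hx : ∀ m, (c : A) ∣ x.coeff m) :
    (c : AddMonoidAlgebra A G) ∣ x := by
  rw [← AddMonoidAlgebra.sum_coeff_single x]
  refine Finset.dvd_sum fun m _ ↦ ?_
  obtain ⟨d, hd⟩ := hx m
  exact ⟨AddMonoidAlgebra.single m d, by
    rw [hd, AddMonoidAlgebra.natCast_def, AddMonoidAlgebra.single_mul_single, zero_add]⟩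

theorem AddMonoidAlgebra.coeff_natCast_mul {A G : Type*} [CommRing A] [AddCommMonoid G] (c : ℕ)
    (x : AddMonoidAlgebra A G) (m : G) :
    ((c : AddMonoidAlgebra A G) * x).coeff m = c * x.coeff m := by
  rw [← nsmul_eq_mul, AddMonoidAlgebra.coeff_smul_apply, nsmul_eq_mul]

theorem AddMonoidAlgebra.natCast_dvd_of_natCast_mul_eq_zero {G : Type*} [AddCommMonoid G]
    {N b c : ℕ} [NeZero N] (hN : b * c = N) {x : AddMonoidAlgebra (ZMod N) G}
    (hx : (b : AddMonoidAlgebra (ZMod N) G) * x = 0) : (c : AddMonoidAlgebra (ZMod N) G) ∣ x :=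
  AddMonoidAlgebra.natCast_dvd fun m ↦ ZMod.natCast_dvd_of_natCast_mul_eq_zero hN <| by
    rw [← AddMonoidAlgebra.coeff_natCast_mul, hx]; rfl

variable {N p : ℕ} (h : p ∣ N)

theorem red_eq_mapRingHom :
    red N p h = AddMonoidAlgebra.mapRingHom (ℤ × ℤ) (ZMod.castHom h (ZMod p)) := by
  apply AddMonoidAlgebra.ringHom_ext <;> intros <;>
    simp [red, AddMonoidAlgebra.liftNCRingHom, AddMonoidAlgebra.single_mul_single]

theorem red_coeff (x : RR N) (m : ℤ × ℤ) :
    (red N p h x).coeff m = ZMod.castHom h (ZMod p) (x.coeff m) := by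
  rw [red_eq_mapRingHom, AddMonoidAlgebra.coeff_mapRingHom]

theorem red_surjective : Function.Surjective (red N p h) := by
  intro y
  induction y using AddMonoidAlgebra.induction_linear with
  | zero => exact ⟨0, map_zero _⟩
  | add y z hy hz =>
    obtain ⟨y, rfl⟩ := hy
    obtain ⟨z, rfl⟩ := hz
    exact ⟨y + z, map_add _ _ _⟩
  | single m a =>
    obtain ⟨a, rfl⟩ := ZMod.castHom_surjective h a
    exact ⟨AddMonoidAlgebra.single m a, by
      rw [red_eq_mapRingHom, AddMonoidAlgebra.mapRingHom_single]⟩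

theorem red_smul (a : ZMod N) (x : RR N) :
    red N p h (a • x) = ZMod.castHom h (ZMod p) a • red N p h x := by
  ext m
  simp only [red_coeff, AddMonoidAlgebra.coeff_smul_apply, smul_eq_mul, map_mul]

theorem red_eq_zero_iff [NeZero N] {x : RR N} : red N p h x = 0 ↔ (p : RR N) ∣ x := by
  refine ⟨fun hx ↦ AddMonoidAlgebra.natCast_dvd fun m ↦
    ZMod.natCast_dvd_of_castHom_eq_zero h ?_, ?_⟩
  · rw [← red_coeff, hx]; rfl
  · rintro ⟨y, rfl⟩
    have hp : (p : RR p) = 0 := by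
      rw [AddMonoidAlgebra.natCast_def, ZMod.natCast_self, AddMonoidAlgebra.single_zero]
    rw [map_mul, map_natCast, hp, zero_mul]

theorem natCast_dvd_or_dvd_of_dvd_mul [NeZero N] (hp : p.Prime) (h : p ∣ N) {a b : RR N}
    (hab : (p : RR N) ∣ a * b) : (p : RR N) ∣ a ∨ (p : RR N) ∣ b := by
  have : Fact p.Prime := ⟨hp⟩
  simpa only [← red_eq_zero_iff h, map_mul, mul_eq_zero] using hab

/-- The map induced by `red` on the quotients by `(f, g)` and its image. -/
noncomputable def redQuotient (f g : RR N) :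
    (RR N ⧸ Ideal.span {f, g}) →ₛₗ[ZMod.castHom h (ZMod p)]
      (RR p ⧸ Ideal.span {red N p h f, red N p h g}) where
  __ := Ideal.quotientMap (Ideal.span {red N p h f, red N p h g}) (red N p h) <| by
    rw [← Ideal.map_le_iff_le_comap, Ideal.map_span, Set.image_pair]
  map_smul' a x := by
    obtain ⟨x, rfl⟩ := Ideal.Quotient.mk_surjective x
    exact congr_arg (Ideal.Quotient.mk _) (red_smul h a x)

theorem redQuotient_mk (f g x : RR N) :
    redQuotient h f g (Ideal.Quotient.mk _ x) = Ideal.Quotient.mk _ (red N p h x) := rfl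

theorem redQuotient_surjective (f g : RR N) : Function.Surjective (redQuotient h f g) := by
  intro y
  obtain ⟨y, rfl⟩ := Ideal.Quotient.mk_surjective y
  obtain ⟨x, rfl⟩ := red_surjective h y
  exact ⟨Ideal.Quotient.mk _ x, rfl⟩

theorem mk_natCast_mul (I : Ideal (RR N)) (c : ℕ) (x : RR N) :
    Ideal.Quotient.mk I (c * x) = (c : ZMod N) • Ideal.Quotient.mk I x := by
  rw [Nat.cast_smul_eq_nsmul, nsmul_eq_mul, map_mul, map_natCast]

theorem exists_eq_smul_of_redQuotient_eq_zero [NeZero N] (f g : RR N)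
    (x : RR N ⧸ Ideal.span {f, g}) (hx : redQuotient h f g x = 0) :
    ∃ y, x = (p : ZMod N) • y := by
  obtain ⟨x, rfl⟩ := Ideal.Quotient.mk_surjective x
  rw [redQuotient_mk, Ideal.Quotient.eq_zero_iff_mem, Ideal.mem_span_pair] at hx
  obtain ⟨r, s, hrs⟩ := hx
  obtain ⟨r, rfl⟩ := red_surjective h r
  obtain ⟨s, rfl⟩ := red_surjective h s
  obtain ⟨y, hy⟩ := (red_eq_zero_iff h (x := x - (r * f + s * g))).mp (by simp [hrs])
  refine ⟨Ideal.Quotient.mk _ y, ?_⟩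
  rw [← mk_natCast_mul, Ideal.Quotient.eq]
  exact Ideal.mem_span_pair.mpr ⟨r, s, by linear_combination -hy⟩

end Laurent

theorem stmt3 (p k : ℕ) (hp : p.Prime) (hk : 1 ≤ k) (f g : RR (p ^ k))
    (htopo : IsTopological f g) :
    Module.Free (ZMod (p ^ k)) (RR (p ^ k) ⧸ Ideal.span {f, g}) ∧
    Module.Finite (ZMod (p ^ k)) (RR (p ^ k) ⧸ Ideal.span {f, g}) ∧
    Module.finrank (ZMod (p ^ k)) (RR (p ^ k) ⧸ Ideal.span {f, g}) =
      Module.finrank (ZMod p)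
        (RR p ⧸ Ideal.span
          {red (p ^ k) p (dvd_pow_self p (by omega)) f,
           red (p ^ k) p (dvd_pow_self p (by omega)) g}) := by
  have hfact : Fact p.Prime := ⟨hp⟩
  have hdvd : p ∣ p ^ k := dvd_pow_self p (by omega)
  obtain ⟨n, rfl⟩ := Nat.exists_eq_add_of_le' hk
  have : NeZero (p ^ (n + 1)) := ⟨pow_ne_zero _ hp.ne_zero⟩
  have : IsLocalRing (ZMod (p ^ (n + 1))) := ZMod.isLocalRing_prime_pow hdvd
  have hzero : (p : RR (p ^ (n + 1))) ^ (n + 1) = 0 := by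
    rw [← Nat.cast_pow, AddMonoidAlgebra.natCast_def, ZMod.natCast_self,
      AddMonoidAlgebra.single_zero]
  have hprime (a b : RR (p ^ (n + 1))) := natCast_dvd_or_dvd_of_dvd_mul hp hdvd (a := a) (b := b)
  have hpow (x : RR (p ^ (n + 1))) (hx : (p : RR (p ^ (n + 1))) ^ n * x = 0) :
      (p : RR (p ^ (n + 1))) ∣ x :=
    AddMonoidAlgebra.natCast_dvd_of_natCast_mul_eq_zero (pow_succ p n).symm (by exact_mod_cast hx)
  have hann (x : RR (p ^ (n + 1))) (hx : (p : RR (p ^ (n + 1))) * x = 0) :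
      (p : RR (p ^ (n + 1))) ^ n ∣ x := by
    exact_mod_cast AddMonoidAlgebra.natCast_dvd_of_natCast_mul_eq_zero (pow_succ' p n).symm hx
  have hred (r s : RR p) (hrs : r * red _ p hdvd f + s * red _ p hdvd g = 0) :
      ∃ h, r = h * red _ p hdvd g ∧ s = -(h * red _ p hdvd f) := by
    obtain ⟨r, rfl⟩ := red_surjective hdvd r
    obtain ⟨s, rfl⟩ := red_surjective hdvd s
    obtain ⟨h, hr, hs⟩ := exists_dvd_sub_of_dvd_mul_add hzero hprime hpow htopo
      ((red_eq_zero_iff hdvd).mp (by simpa using hrs))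
    rw [← red_eq_zero_iff hdvd] at hr hs
    simp only [map_sub, map_add, map_mul] at hr hs
    exact ⟨red _ p hdvd h, sub_eq_zero.mp hr, eq_neg_of_add_eq_zero_left hs⟩
  have := AddMonoidAlgebra.finite_quotient_span_pair hred
  have hsurj := ZMod.castHom_surjective hdvd
  have hker := exists_eq_smul_of_redQuotient_eq_zero hdvd f g
  have hfinite : Module.Finite (ZMod (p ^ (n + 1))) (RR (p ^ (n + 1)) ⧸ Ideal.span {f, g}) :=
    .of_finite_reduction hsurj ⟨n + 1, ZMod.natCast_pow_eq_zero p (n + 1)⟩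
      (redQuotient hdvd f g) (redQuotient_surjective hdvd f g) hker
  have := Module.finitePresentation_of_finite (ZMod (p ^ (n + 1)))
    (RR (p ^ (n + 1)) ⧸ Ideal.span {f, g})
  have hfree : Module.Free (ZMod (p ^ (n + 1))) (RR (p ^ (n + 1)) ⧸ Ideal.span {f, g}) := by
    refine Module.free_of_smul_eq_zero (u := (p : ZMod (p ^ (n + 1))) ^ n)
      (ZMod.maximalIdeal_prime_pow hdvd)
      (by rw [← pow_succ, ZMod.natCast_pow_eq_zero]) fun x hx ↦ ?_
    obtain ⟨x, rfl⟩ := Ideal.Quotient.mk_surjective x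
    rw [← mk_natCast_mul, Ideal.Quotient.eq_zero_iff_mem] at hx
    obtain ⟨c, hc⟩ := exists_sub_mem_span_pair_of_mul_mem hzero hprime hpow hann htopo hx
    refine ⟨Ideal.Quotient.mk _ c, ?_⟩
    rw [← Nat.cast_pow, ← mk_natCast_mul, Ideal.Quotient.eq]
    exact_mod_cast hc
  exact ⟨hfree, hfinite, Module.finrank_eq_of_reduction hsurj (by simp)
    (redQuotient hdvd f g) (redQuotient_surjective hdvd f g) hker⟩
end

section
/- Let N be a positive integer, a an integer, N_a the largest divisor of N coprime to a, and α a natural number. Then X^α − 1 lies in the ideal Ideal.span {X − a, Y − a} of R_N if and only if N_a divides a^α − 1 in ℤ. (Consequently, the anyon periodicity of the Watanabe–Cheng–Fuji model along the x-direction is the multiplicative order of a modulo N_a.) -/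
/-- The monomial `X`. -/
noncomputable def Xv (N : ℕ) : RR N := AddMonoidAlgebra.single ((1 : ℤ), (0 : ℤ)) 1

/-- The monomial `Y`. -/
noncomputable def Yv (N : ℕ) : RR N := AddMonoidAlgebra.single ((0 : ℤ), (1 : ℤ)) 1

theorem Nat.exists_dvd_pow_of_forall_prime_dvd (b m : ℕ) (hm : m ≠ 0)
    (h : ∀ p : ℕ, p.Prime → p ∣ m → p ∣ b) : ∃ k : ℕ, m ∣ b ^ k := by
  induction m using Nat.recOnMul with
  | zero => exact absurd rfl hm
  | one => exact ⟨0, one_dvd _⟩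
  | prime p hp => exact ⟨1, by simpa using h p hp dvd_rfl⟩
  | mul m n ihm ihn =>
    obtain ⟨k, hk⟩ := ihm (left_ne_zero_of_mul hm) fun p hp hd => h p hp (hd.mul_right n)
    obtain ⟨l, hl⟩ := ihn (right_ne_zero_of_mul hm) fun p hp hd => h p hp (hd.mul_left m)
    exact ⟨k + l, pow_add b k l ▸ mul_dvd_mul hk hl⟩

/-- The largest divisor of `N` coprime to `a` becomes a multiple of `N` after multiplication by a
suitable power of `a`. -/
theorem exists_dvd_mul_pow_of_maximal_coprime {N : ℕ} (hN : 0 < N) {a : ℤ} {d : ℕ}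
    (hd : d ∣ N) (hcop : IsCoprime (d : ℤ) a)
    (hmax : ∀ e : ℕ, e ∣ N → IsCoprime (e : ℤ) a → e ≤ d) :
    ∃ k : ℕ, (N : ℤ) ∣ d * a ^ k := by
  obtain ⟨m, rfl⟩ := hd
  have hd0 : 0 < d := Nat.pos_of_mul_pos_right hN
  have hm0 : m ≠ 0 := right_ne_zero_of_mul hN.ne'
  obtain ⟨k, hk⟩ := Nat.exists_dvd_pow_of_forall_prime_dvd a.natAbs m hm0 fun p hp hpm => by
    by_contra hpa
    have hpcop : IsCoprime (p : ℤ) a := by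
      rw [Int.isCoprime_iff_gcd_eq_one]
      exact (Nat.Prime.coprime_iff_not_dvd hp).2 hpa
    have hle := hmax (d * p) (mul_dvd_mul_left d hpm) (by
      push_cast
      exact hcop.mul_left hpcop)
    nlinarith [hp.two_le]
  refine ⟨k, ?_⟩
  push_cast
  refine mul_dvd_mul_left _ ?_
  rw [← Int.natAbs_dvd_natAbs, Int.natAbs_pow]
  exact hk

/-- Evaluation of Laurent polynomials over `ZMod N` at `X = Y = u`, for a unit `u` of `ZMod d`
with `d ∣ N`. -/
noncomputable def evalDiagonal {N d : ℕ} (hd : d ∣ N) (u : (ZMod d)ˣ) : RR N →+* ZMod d :=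
  AddMonoidAlgebra.liftNCRingHom (ZMod.castHom hd (ZMod d))
    ((Units.coeHom _).comp ((zpowersHom _ u).comp
      (AddMonoidHom.toMultiplicative
        ((AddMonoidHom.id ℤ).coprod (AddMonoidHom.id ℤ)))))
    fun _ _ => Commute.all _ _

theorem evalDiagonal_Xv {N d : ℕ} (hd : d ∣ N) (u : (ZMod d)ˣ) :
    evalDiagonal hd u (Xv N) = u := by
  simp [evalDiagonal, Xv, AddMonoidAlgebra.liftNCRingHom, ZMod.cast_one hd]

theorem evalDiagonal_Yv {N d : ℕ} (hd : d ∣ N) (u : (ZMod d)ˣ) :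
    evalDiagonal hd u (Yv N) = u := by
  simp [evalDiagonal, Yv, AddMonoidAlgebra.liftNCRingHom, ZMod.cast_one hd]

theorem isUnit_Xv (N : ℕ) : IsUnit (Xv N) :=
  IsUnit.of_mul_eq_one (AddMonoidAlgebra.single ((-1 : ℤ), (0 : ℤ)) 1) (by
    simp [Xv, AddMonoidAlgebra.single_mul_single, AddMonoidAlgebra.one_def, Prod.zero_eq_mk])

theorem intCast_RR_eq_zero {N : ℕ} {n : ℤ} (h : (N : ℤ) ∣ n) : (n : RR N) = 0 := by
  rw [← map_intCast (algebraMap (ZMod N) (RR N)), (ZMod.intCast_zmod_eq_zero_iff_dvd n N).2 h,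
    map_zero]

/-- Mobility condition for the Watanabe–Cheng–Fuji model `BB_N(X - a, Y - a)`:
`X^α - 1` lies in the ideal `(X - a, Y - a)` iff `N_a` divides `a^α - 1`. -/
theorem stmt10 (N : ℕ) (hN : 0 < N) (a : ℤ) (Na : ℕ)
    (hNa_dvd : Na ∣ N) (hNa_cop : IsCoprime (Na : ℤ) a)
    (hNa_max : ∀ d : ℕ, d ∣ N → IsCoprime ((d : ℤ)) a → d ≤ Na)
    (α : ℕ) :
    (Xv N ^ α - 1 ∈ Ideal.span {Xv N - (a : RR N), Yv N - (a : RR N)}) ↔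
      (Na : ℤ) ∣ a ^ α - 1 := by
  have hXJ : Xv N - (a : RR N) ∈ Ideal.span {Xv N - (a : RR N), Yv N - (a : RR N)} :=
    Ideal.subset_span (by simp)
  constructor
  · intro h
    obtain ⟨u, hu⟩ : IsUnit (a : ZMod Na) := by
      obtain ⟨r, s, hrs⟩ := hNa_cop
      refine IsUnit.of_mul_eq_one (s : ZMod Na) ?_
      have := congrArg (Int.cast : ℤ → ZMod Na) hrs
      push_cast at this
      simpa [mul_comm] using this
    have hle : Ideal.span {Xv N - (a : RR N), Yv N - (a : RR N)} ≤
        RingHom.ker (evalDiagonal hNa_dvd u) := by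
      rw [Ideal.span_le]
      rintro x (rfl | rfl) <;>
        simp [RingHom.mem_ker, evalDiagonal_Xv, evalDiagonal_Yv, hu]
    have h0 := RingHom.mem_ker.1 (hle h)
    rw [map_sub, map_pow, evalDiagonal_Xv, map_one, hu] at h0
    rw [← ZMod.intCast_zmod_eq_zero_iff_dvd]
    exact_mod_cast h0
  · intro h
    obtain ⟨k, hk⟩ := exists_dvd_mul_pow_of_maximal_coprime hN hNa_dvd hNa_cop hNa_max
    have hpow (n : ℕ) : Xv N ^ n - (a : RR N) ^ n ∈
        Ideal.span {Xv N - (a : RR N), Yv N - (a : RR N)} :=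
      Ideal.mem_of_dvd _ (sub_dvd_pow_sub_pow _ _ n) hXJ
    have hNaJ : (Na : RR N) ∈ Ideal.span {Xv N - (a : RR N), Yv N - (a : RR N)} := by
      rw [← Ideal.mul_unit_mem_iff_mem _ ((isUnit_Xv N).pow k)]
      have h0 : (Na : RR N) * (a : RR N) ^ k = 0 := by
        exact_mod_cast intCast_RR_eq_zero hk
      have := Ideal.mul_mem_left _ (Na : RR N) (hpow k)
      rwa [mul_sub, h0, sub_zero] at this
    obtain ⟨c, hc⟩ := h
    have hc' : (a : RR N) ^ α - 1 = c * Na := by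
      rw [mul_comm]
      exact_mod_cast congrArg (Int.cast : ℤ → RR N) hc
    have := add_mem (hpow α) (Ideal.mul_mem_left _ (c : RR N) hNaJ)
    rwa [← hc', sub_add_sub_cancel] at this
end
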